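/- arXiv:2403.04728 — 2 statements merged into one kernel-verified Lean document; each statement's English description precedes it below -/
import Mathlib

section
/- Let t ≥ 2 be an integer and let A be a column-t-partite zero-one matrix. Then there is a constant C (depending on A and t) such that for every positive integer n, ex(n, A) ≤ C · n^{2 − 1/t}. -/
/-- A zero-one matrix `M` contains a zero-one matrix `A` if there are strictly increasing
injections of rows and columns such that every 1-entry of `A` corresponds to a 1-entry of `M`. -/
def matContains {m n a b : ℕ} (M : Fin m → Fin n → Bool) (A : Fin a → Fin b → Bool) : Prop :=
  ∃ f : Fin a → Fin m, ∃ g : Fin b → Fin n, StrictMono f ∧ StrictMono g ∧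
    ∀ i j, A i j = true → M (f i) (g j) = true

/-- The weight of a zero-one matrix: its number of 1-entries. -/
def matWeight {m n : ℕ} (M : Fin m → Fin n → Bool) : ℕ :=
  (Finset.univ.filter fun p : Fin m × Fin n => M p.1 p.2 = true).card

/-- The extremal number `ex(n, A)`. -/
noncomputable def matEx {a b : ℕ} (n : ℕ) (A : Fin a → Fin b → Bool) : ℕ :=
  sSup {w : ℕ | ∃ M : Fin n → Fin n → Bool, ¬ matContains M A ∧ matWeight M = w}

/-- `A` is column-`t`-partite: the columns can be cut into `t` consecutive intervals
(given by cut points `c 0 = 0 ≤ c 1 ≤ ⋯ ≤ c t = b`) such that each row has at most one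
1-entry within each interval. -/
def ColumnPartite {a b : ℕ} (t : ℕ) (A : Fin a → Fin b → Bool) : Prop :=
  ∃ c : ℕ → ℕ, Monotone c ∧ c 0 = 0 ∧ c t = b ∧
    ∀ i : Fin a, ∀ p < t,
      (Finset.univ.filter fun j : Fin b =>
        A i j = true ∧ c p ≤ (j : ℕ) ∧ (j : ℕ) < c (p + 1)).card ≤ 1

/-!
Write the `n` rows with `D` digits in base `L`, where `D` is a constant and `n ≤ L ^ D`, so that
they become the leaves of a tree. For a `t`-tuple `T` of columns let `R T` be the set of rows with
1-entries in all columns of `T`. At most `a ^ D` rows of `R T` have fewer than `a` children above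
`R T` at each of their ancestors. If `M` has more than `C * n ^ (2 - 1 / t)` 1-entries, the pairs
`(r, T)` with `r ∈ R T` far outnumber these exceptions. Hence some row `r`, with
`d ≥ n ^ (1 - 1 / t)` 1-entries, lies below a node with `a` children above `R T` for a positive
proportion of the `d ^ t` tuples `T` in its support.

The level of the node and the last digits of its children take only `D * L ^ a` values, a small
power of `n`, so a family of increasing tuples that is dense up to this factor shares them. By
Erdős's box theorem the family contains a complete `t`-partite hypergraph. The columns of `A` in its
`p`-th interval are placed in the `p`-th side. Each row of `A` uses at most one column of each
interval, that is, a single tuple `T` of the box, and the `i`-th row is placed in `R T` below the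
`i`-th common child.
-/

section Counting

open Finset

theorem pow_le_factorial_mul_choose {x : ℝ} {k d : ℕ} (hx : 0 ≤ x) (h : x + k ≤ d) :
    x ^ k ≤ k.factorial * (d.choose k : ℝ) := by
  have hkd : k ≤ d := by exact_mod_cast (le_add_of_nonneg_left hx).trans h
  have hx' : x ≤ ((d + 1 - k : ℕ) : ℝ) := by
    rw [Nat.cast_sub (by omega)]
    push_cast
    linarith
  calc x ^ k ≤ ((d + 1 - k : ℕ) : ℝ) ^ k := by gcongr
    _ ≤ k.factorial * (d.choose k : ℝ) := by
      rw [mul_comm, ← div_le_iff₀ (by positivity)]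
      exact Nat.pow_le_choose k d

theorem card_mul_pow_le_factorial_mul_sum_choose {β : Type*} {B : Finset β} {d : β → ℕ} {x : ℝ}
    {k : ℕ} (hx : 0 ≤ x) (h : #B * (x + k) ≤ ∑ b ∈ B, (d b : ℝ)) :
    #B * x ^ k ≤ k.factorial * ∑ b ∈ B, ((d b).choose k : ℝ) := by
  rcases k with _ | k
  · simp
  obtain rfl | hB := B.eq_empty_or_nonempty
  · simp
  have hBpos : (0 : ℝ) < #B := by exact_mod_cast hB.card_pos
  let e : β → ℝ := fun b => ((d b - (k + 1) : ℕ) : ℝ)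
  have he : #B * x ≤ ∑ b ∈ B, e b := by
    have : ∑ b ∈ B, ((d b : ℝ) - (k + 1)) ≤ ∑ b ∈ B, e b := by
      gcongr with b
      rw [sub_le_iff_le_add]
      simp only [e]
      exact_mod_cast le_tsub_add
    rw [sum_sub_distrib, sum_const, nsmul_eq_mul] at this
    push_cast at h
    linarith
  have hchoose (b : β) : e b ^ (k + 1) ≤ (k + 1).factorial * ((d b).choose (k + 1) : ℝ) := by
    obtain hlt | hle := Nat.lt_or_ge (d b) (k + 1)
    · simp [e, Nat.sub_eq_zero_of_le hlt.le, Nat.choose_eq_zero_of_lt hlt]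
    · refine pow_le_factorial_mul_choose (by positivity) ?_
      rw [← Nat.cast_add, Nat.sub_add_cancel hle]
  refine le_of_mul_le_mul_left ?_ (pow_pos hBpos k)
  calc (#B : ℝ) ^ k * (#B * x ^ (k + 1)) = (#B * x) ^ (k + 1) := by ring
    _ ≤ (∑ b ∈ B, e b) ^ (k + 1) := by gcongr
    _ ≤ (#B : ℝ) ^ k * ∑ b ∈ B, e b ^ (k + 1) :=
      pow_sum_le_card_mul_sum_pow (fun _ _ => Nat.cast_nonneg _) k
    _ ≤ (#B : ℝ) ^ k * ∑ b ∈ B, (k + 1).factorial * ((d b).choose (k + 1) : ℝ) := by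
      gcongr with b
      exact hchoose b
    _ = (#B : ℝ) ^ k * ((k + 1).factorial * ∑ b ∈ B, ((d b).choose (k + 1) : ℝ)) := by
      rw [← mul_sum]

theorem sum_choose_card_filter_eq_sum_powersetCard {α β : Type*} (S : Finset α) (B : Finset β)
    (r : α → β → Prop) [∀ y b, Decidable (r y b)] (k : ℕ) :
    ∑ b ∈ B, (#{y ∈ S | r y b}).choose k = ∑ K ∈ S.powersetCard k, #{b ∈ B | ∀ y ∈ K, r y b} := by
  classical
  have hlink (b : β) :
      (#{y ∈ S | r y b}).choose k = #{K ∈ S.powersetCard k | ∀ y ∈ K, r y b} := by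
    rw [← card_powersetCard]
    congr 1
    ext K
    simp only [mem_powersetCard, mem_filter, subset_iff]
    grind
  simp only [hlink]
  exact (sum_card_bipartiteAbove_eq_sum_card_bipartiteBelow fun K b => ∀ y ∈ K, r y b).symm

/-- Convexity makes the average number of common neighbours of a `k`-subset of `S` at least
`(δ / 2) ^ k * #B`. -/
theorem exists_card_eq_le_card_common_neighbors {α β : Type*} {S : Finset α} {B : Finset β}
    {r : α → β → Prop} [∀ y b, Decidable (r y b)] {δ : ℝ} {k : ℕ} (hδ0 : 0 ≤ δ) (hδ1 : δ ≤ 1)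
    (hk : 2 * k ≤ δ * #S) (hr : δ * #S * #B ≤ ∑ b ∈ B, (#{y ∈ S | r y b} : ℝ)) :
    ∃ K : Finset α, #K = k ∧ (δ / 2) ^ k * #B ≤ (#{b ∈ B | ∀ y ∈ K, r y b} : ℝ) := by
  have hkS : k ≤ #S := by
    have : (k : ℝ) ≤ #S := by nlinarith [(#S).cast_nonneg (α := ℝ), k.cast_nonneg (α := ℝ)]
    exact_mod_cast this
  have hsum : ∑ _K ∈ S.powersetCard k, (δ / 2) ^ k * (#B : ℝ) ≤
      ∑ K ∈ S.powersetCard k, (#{b ∈ B | ∀ y ∈ K, r y b} : ℝ) := by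
    have hconvex : #B * (δ / 2 * #S) ^ k ≤
        k.factorial * ∑ b ∈ B, ((#{y ∈ S | r y b}).choose k : ℝ) :=
      card_mul_pow_le_factorial_mul_sum_choose (by positivity) (by
        refine le_trans ?_ hr
        have : (0 : ℝ) ≤ #B := Nat.cast_nonneg _
        nlinarith)
    have hcount : ∑ b ∈ B, ((#{y ∈ S | r y b}).choose k : ℝ) =
        ∑ K ∈ S.powersetCard k, (#{b ∈ B | ∀ y ∈ K, r y b} : ℝ) := by
      exact_mod_cast sum_choose_card_filter_eq_sum_powersetCard S B r k
    rw [sum_const, card_powersetCard, nsmul_eq_mul, ← hcount]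
    calc ((#S).choose k : ℝ) * ((δ / 2) ^ k * #B)
        ≤ (#S : ℝ) ^ k / k.factorial * ((δ / 2) ^ k * #B) := by
          gcongr
          exact Nat.choose_le_pow_div k #S
      _ = #B * (δ / 2 * #S) ^ k / k.factorial := by ring
      _ ≤ ∑ b ∈ B, ((#{y ∈ S | r y b}).choose k : ℝ) := by
          rwa [div_le_iff₀' (by positivity)]
  obtain ⟨K, hK, hcard⟩ := exists_le_of_sum_le (powersetCard_nonempty.mpr hkS) hsum
  exact ⟨K, (mem_powersetCard.mp hK).2, hcard⟩

theorem exists_card_le_card_mul_card_filter {τ ζ : Type*} [Fintype ζ] {G : Finset τ}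
    (hG : G.Nonempty) {p : ζ → τ → Prop} [∀ z x, Decidable (p z x)] (h : ∀ x ∈ G, ∃ z, p z x) :
    ∃ z, #G ≤ Fintype.card ζ * #{x ∈ G | p z x} := by
  have : Nonempty ζ := let ⟨x, hx⟩ := hG; (h x hx).nonempty
  by_contra! hlt
  have hsum : #G ≤ ∑ z, #{x ∈ G | p z x} := by
    classical
    refine (card_le_card fun x hx => ?_).trans card_biUnion_le
    obtain ⟨z, hz⟩ := h x hx
    exact mem_biUnion.mpr ⟨z, mem_univ z, mem_filter.mpr ⟨hx, hz⟩⟩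
  have hlt_sum : ∑ z, Fintype.card ζ * #{x ∈ G | p z x} < ∑ _z : ζ, #G :=
    sum_lt_sum_of_nonempty univ_nonempty fun z _ => hlt z
  rw [← mul_sum, sum_const, smul_eq_mul, card_univ] at hlt_sum
  exact absurd (lt_of_mul_lt_mul_left hlt_sum (Nat.zero_le _)) hsum.not_gt

/-- If every large `d i` had `u i ≥ c * d i ^ t`, then `u i ≥ c * q ^ (t - 1) * (d i - q)` for all
`i`, and summing these linear bounds contradicts `hu`. -/
theorem exists_le_and_lt_mul_pow {ι : Type*} {s : Finset ι} {d u : ι → ℝ} {c q : ℝ} {t : ℕ}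
    (ht : t ≠ 0) (hc : 0 ≤ c) (hq : 0 ≤ q) (hu0 : ∀ i ∈ s, 0 ≤ u i)
    (hd : 2 * #s * q ≤ ∑ i ∈ s, d i) (hu : ∑ i ∈ s, u i < c * #s * q ^ t) :
    ∃ i ∈ s, q ≤ d i ∧ u i < c * d i ^ t := by
  obtain ⟨t, rfl⟩ := Nat.exists_eq_succ_of_ne_zero ht
  by_contra! hle
  have hlinear : ∀ i ∈ s, c * q ^ t * (d i - q) ≤ u i := by
    intro i hi
    obtain hqi | hqi := le_or_gt q (d i)
    · have hdi : 0 ≤ d i := hq.trans hqi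
      calc c * q ^ t * (d i - q) ≤ c * d i ^ t * d i := by
            gcongr
            linarith
        _ = c * d i ^ (t + 1) := by ring
        _ ≤ u i := hle i hi hqi
    · exact (mul_nonpos_of_nonneg_of_nonpos (by positivity) (by linarith)).trans (hu0 i hi)
  have hsum := sum_le_sum hlinear
  rw [← mul_sum, sum_sub_distrib, sum_const, nsmul_eq_mul] at hsum
  have hq_sum : c * q ^ t * (#s * q) ≤ c * q ^ t * (∑ i ∈ s, d i - #s * q) := by
    gcongr
    linarith
  rw [Nat.succ_eq_add_one, pow_succ] at hu
  linarith

end Counting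

section Box

open Finset

/-- A `t`-partite hypergraph `F`, whose edges are `t`-tuples, contains the complete `t`-partite
hypergraph with parts of size `k`. The parts need not be disjoint. -/
def ContainsBox {α : Type*} {t : ℕ} (k : ℕ) (F : Finset (Fin t → α)) : Prop :=
  ∃ K : Fin t → Finset α, (∀ p, #(K p) = k) ∧ Fintype.piFinset K ⊆ F

variable {α : Type*} {t : ℕ} {S : Finset α} {F : Finset (Fin (t + 1) → α)}

theorem card_le_sum_card_filter_cons_mem [DecidableEq α]
    (hF : F ⊆ Fintype.piFinset fun _ => S) :
    #F ≤ ∑ b ∈ Fintype.piFinset fun _ : Fin t => S,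
      #{y ∈ S | (Fin.cons y b : Fin (t + 1) → α) ∈ F} := by
  rw [← card_sigma]
  refine card_le_card_of_injOn (fun T => ⟨Fin.tail T, T 0⟩) (fun T hT => ?_) ?_
  · have hTS := Fintype.mem_piFinset.mp (hF hT)
    rw [mem_coe, mem_sigma, Fintype.mem_piFinset, mem_filter, Fin.cons_self_tail]
    exact ⟨fun p => hTS p.succ, hTS 0, hT⟩
  · intro T _ T' _ h
    obtain ⟨htail, hhead⟩ := Sigma.mk.inj h
    rw [← Fin.cons_self_tail T, ← Fin.cons_self_tail T', htail, eq_of_heq hhead]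

theorem ContainsBox.cons {k : ℕ} {K : Finset α} {F' : Finset (Fin t → α)} (hK : #K = k)
    (hF' : ContainsBox k F') (h : ∀ b ∈ F', ∀ y ∈ K, (Fin.cons y b : Fin (t + 1) → α) ∈ F) :
    ContainsBox k F := by
  obtain ⟨K', hK', hsub⟩ := hF'
  refine ⟨Fin.cons K K', Fin.cases hK hK', fun T hT => ?_⟩
  rw [Fintype.mem_piFinset] at hT
  rw [← Fin.cons_self_tail T]
  exact h _ (hsub (Fintype.mem_piFinset.mpr fun p => hT p.succ)) _ (hT 0)

/-- Erdős's box theorem, by induction on `t`: some `k`-set of first coordinates has a dense common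
link. The loss in density is polynomial, which is what allows the density to decay with `#S`. -/
theorem exists_containsBox_of_dense (k t : ℕ) : ∃ c : ℕ, ∃ C : ℝ, 0 < C ∧
    ∀ {α : Type*} {S : Finset α} {F : Finset (Fin t → α)} {δ : ℝ}, 0 < δ → δ ≤ 1 →
      F ⊆ Fintype.piFinset (fun _ => S) → δ * (#S : ℝ) ^ t ≤ #F → C ≤ δ ^ c * #S →
      ContainsBox k F := by
  induction t with
  | zero =>
    refine ⟨0, 1, one_pos, fun {α S F δ} hδ0 _ _ hF _ => ?_⟩
    obtain ⟨T, hT⟩ : F.Nonempty := by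
      rw [pow_zero, mul_one] at hF
      exact card_pos.mp (by exact_mod_cast hδ0.trans_le hF)
    exact ⟨finZeroElim, finZeroElim, fun T' _ => Subsingleton.elim T T' ▸ hT⟩
  | succ t ih =>
    obtain ⟨c, C, hC, ih⟩ := ih
    refine ⟨k * c + 1, C * 2 ^ (k * c) + 2 * k, by positivity,
      fun {α S F δ} hδ0 hδ1 hFS hF hS => ?_⟩
    classical
    have hk : 2 * k ≤ δ * #S := by
      have : δ ^ (k * c + 1) ≤ δ := pow_le_of_le_one hδ0.le hδ1 (Nat.succ_ne_zero _)
      have hpos : 0 < C * 2 ^ (k * c) := by positivity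
      calc (2 * k : ℝ) ≤ δ ^ (k * c + 1) * #S := by linarith
        _ ≤ δ * #S := by gcongr
    have hlink : C ≤ ((δ / 2) ^ k) ^ c * #S := by
      have : δ ^ (k * c + 1) ≤ δ ^ (k * c) := pow_le_pow_of_le_one hδ0.le hδ1 (Nat.le_succ _)
      rw [← pow_mul, div_pow, div_mul_eq_mul_div, le_div_iff₀ (by positivity)]
      calc C * 2 ^ (k * c) ≤ δ ^ (k * c + 1) * #S := by linarith [k.cast_nonneg (α := ℝ)]
        _ ≤ δ ^ (k * c) * #S := by gcongr
    obtain ⟨K, hK, hcommon⟩ := exists_card_eq_le_card_common_neighbors (k := k) (S := S)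
      (B := Fintype.piFinset fun _ : Fin t => S)
      (r := fun y b => (Fin.cons y b : Fin (t + 1) → α) ∈ F) hδ0.le hδ1 hk (by
        rw [Fintype.card_piFinset_const, Nat.cast_pow, mul_assoc, ← pow_succ']
        exact hF.trans (by exact_mod_cast card_le_sum_card_filter_cons_mem hFS))
    rw [Fintype.card_piFinset_const, Nat.cast_pow] at hcommon
    exact .cons hK (ih (by positivity) (pow_le_one₀ (by positivity) (by linarith))
      (filter_subset _ _) hcommon hlink) fun b hb => (mem_filter.mp hb).2

end Box

section DigitTree

open Finset

variable {m L D a j : ℕ}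

/-- The ancestor of the row `r` at level `j` of the base-`L` digit tree, whose leaves, at level `0`,
are the rows. The parent of a node `w` is `w / L`. -/
def digitAncestor (L j : ℕ) (r : Fin m) : ℕ := r / L ^ j

theorem digitAncestor_succ (L j : ℕ) (r : Fin m) :
    digitAncestor L (j + 1) r = digitAncestor L j r / L := by
  rw [digitAncestor, digitAncestor, Nat.div_div_eq_div_mul, pow_succ]

theorem monotone_digitAncestor (L j : ℕ) : Monotone (digitAncestor L j : Fin m → ℕ) :=
  fun _ _ h => Nat.div_le_div_right h

/-- The children of the node `v`, at level `j + 1` of the base-`L` digit tree, that are ancestors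
of rows of `R`. -/
def digitChildren (L j v : ℕ) (R : Finset (Fin m)) : Finset ℕ :=
  {w ∈ R.image (digitAncestor L j) | w / L = v}

/-- Some ancestor of the row `r`, at one of the levels `1, …, D`, has at least `a` children above
rows of `R`. Such children are where the increasing rows of a copy of `A` are found. -/
def IsBranching (L D a : ℕ) (R : Finset (Fin m)) (r : Fin m) : Prop :=
  ∃ j < D, a ≤ #(digitChildren L j (digitAncestor L (j + 1) r) R)

theorem card_image_digitAncestor_le {R S : Finset (Fin m)} (hSR : S ⊆ R)
    (h : ∀ r ∈ S, #(digitChildren L j (digitAncestor L (j + 1) r) R) ≤ a) :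
    #(S.image (digitAncestor L j)) ≤ a * #(S.image (digitAncestor L (j + 1))) := by
  have hparent : S.image (digitAncestor L (j + 1)) =
      (S.image (digitAncestor L j)).image (· / L) := by
    simp only [image_image, Function.comp_def, ← digitAncestor_succ]
  rw [hparent]
  refine card_le_mul_card_image _ _ fun v hv => ?_
  rw [← hparent] at hv
  obtain ⟨r, hr, rfl⟩ := mem_image.mp hv
  exact (card_le_card (filter_subset_filter _ (image_subset_image hSR))).trans (h r hr)

open scoped Classical in
theorem card_filter_not_isBranching_le (hm : m ≤ L ^ D) (R : Finset (Fin m)) :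
    #{r ∈ R | ¬IsBranching L D a R r} ≤ a ^ D := by
  set S := {r ∈ R | ¬IsBranching L D a R r}
  have hlevel : ∀ j ≤ D, #S ≤ a ^ j * #(S.image (digitAncestor L j)) := by
    intro j
    induction j with
    | zero =>
      intro _
      have hleaf : digitAncestor L 0 = (Fin.val : Fin m → ℕ) := by
        funext r
        rw [digitAncestor, pow_zero, Nat.div_one]
      rw [pow_zero, one_mul, hleaf, card_image_of_injective _ Fin.val_injective]
    | succ j ih =>
      intro hj
      have hchildren : ∀ r ∈ S, #(digitChildren L j (digitAncestor L (j + 1) r) R) ≤ a := by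
        intro r hr
        have hr' := (mem_filter.mp hr).2
        simp only [IsBranching, not_exists, not_and, not_le] at hr'
        exact (hr' j hj).le
      calc #S ≤ a ^ j * #(S.image (digitAncestor L j)) := ih (Nat.le_of_succ_le hj)
        _ ≤ a ^ j * (a * #(S.image (digitAncestor L (j + 1)))) := by
          gcongr
          exact card_image_digitAncestor_le (filter_subset _ _) hchildren
        _ = a ^ (j + 1) * #(S.image (digitAncestor L (j + 1))) := by ring
  have hroot : S.image (digitAncestor L D) ⊆ {0} := by
    intro v hv
    obtain ⟨r, -, rfl⟩ := mem_image.mp hv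
    exact mem_singleton.mpr (Nat.div_eq_of_lt (r.isLt.trans_le hm))
  calc #S ≤ a ^ D * #(S.image (digitAncestor L D)) := hlevel D le_rfl
    _ ≤ a ^ D * 1 := by
      gcongr
      exact card_le_card hroot
    _ = a ^ D := mul_one _

open scoped Classical in
theorem sum_card_not_isBranching_le {τ : Type*} [Fintype τ] (hm : m ≤ L ^ D)
    (R : τ → Finset (Fin m)) :
    ∑ r, #{T | r ∈ R T ∧ ¬IsBranching L D a (R T) r} ≤ Fintype.card τ * a ^ D := by
  calc ∑ r, #{T | r ∈ R T ∧ ¬IsBranching L D a (R T) r}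
      = ∑ T, #{r | r ∈ R T ∧ ¬IsBranching L D a (R T) r} :=
        sum_card_bipartiteAbove_eq_sum_card_bipartiteBelow _
    _ ≤ ∑ _T : τ, a ^ D := by
        gcongr with T
        rw [← filter_filter, filter_univ_mem]
        exact card_filter_not_isBranching_le hm (R T)
    _ = Fintype.card τ * a ^ D := by rw [sum_const, card_univ, smul_eq_mul]

/-- The last digits of `a` distinct children of a common parent form the increasing map `φ`. -/
theorem IsBranching.exists_digits {R : Finset (Fin m)} {r : Fin m} (hL : 0 < L)
    (h : IsBranching L D a R r) :
    ∃ (j : Fin D) (φ : Fin a ↪o Fin L), ∀ i, ∃ s ∈ R,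
      digitAncestor L j s = L * digitAncestor L (j + 1) r + φ i := by
  obtain ⟨j, hj, hcard⟩ := h
  obtain ⟨Q, hQ, hQcard⟩ := exists_subset_card_eq hcard
  let w : Fin a ↪o ℕ := Q.orderEmbOfFin hQcard
  have hw (i : Fin a) : w i ∈ digitChildren L j (digitAncestor L (j + 1) r) R :=
    hQ (Q.orderEmbOfFin_mem hQcard i)
  have hdigit (i : Fin a) : w i = L * digitAncestor L (j + 1) r + w i % L := by
    rw [← (mem_filter.mp (hw i)).2, Nat.div_add_mod]
  refine ⟨⟨j, hj⟩, .ofStrictMono (fun i => ⟨w i % L, Nat.mod_lt _ hL⟩) fun i i' hii' => ?_,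
    fun i => ?_⟩
  · have hlt : w i < w i' := w.strictMono hii'
    rw [hdigit i, hdigit i'] at hlt
    exact Nat.lt_of_add_lt_add_left hlt
  · obtain ⟨s, hs, hsw⟩ := mem_image.mp (mem_filter.mp (hw i)).1
    exact ⟨s, hs, hsw.trans (hdigit i)⟩

/-- A branching tuple has at most `D * L ^ a` branching patterns (a level and `a` digits), so a
`1 / (D * L ^ a)` fraction of the tuples of a family share one. -/
theorem exists_common_digits {τ : Type*} {G : Finset τ} {R : τ → Finset (Fin m)} {r : Fin m}
    (hL : 0 < L) (hG : G.Nonempty) (h : ∀ T ∈ G, IsBranching L D a (R T) r) :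
    ∃ (j : Fin D) (φ : Fin a ↪o Fin L), ∃ G' ⊆ G, #G ≤ D * L ^ a * #G' ∧
      ∀ T ∈ G', ∀ i, ∃ s ∈ R T,
        digitAncestor L j s = L * digitAncestor L (j + 1) r + φ i := by
  classical
  obtain ⟨⟨j, φ⟩, hcard⟩ := exists_card_le_card_mul_card_filter (ζ := Fin D × (Fin a ↪o Fin L))
    (p := fun z T => ∀ i, ∃ s ∈ R T,
      digitAncestor L z.1 s = L * digitAncestor L (z.1 + 1) r + z.2 i) hG fun T hT =>
        let ⟨j, φ, hφ⟩ := (h T hT).exists_digits hL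
        ⟨(j, φ), hφ⟩
  have hpatterns : Fintype.card (Fin D × (Fin a ↪o Fin L)) ≤ D * L ^ a := by
    rw [Fintype.card_prod, Fintype.card_fin]
    gcongr
    simpa using Fintype.card_le_of_injective _ (DFunLike.coe_injective (F := Fin a ↪o Fin L))
  exact ⟨j, φ, _, filter_subset _ _, hcard.trans (Nat.mul_le_mul_right _ hpatterns),
    fun T hT => (mem_filter.mp hT).2⟩

end DigitTree

section Tuples

open Finset

variable {α : Type*} [LinearOrder α]

open scoped Classical in
/-- The increasing `t`-tuples of elements of `N`. -/
noncomputable def increasingTuples (t : ℕ) (N : Finset α) : Finset (Fin t → α) :=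
  {T ∈ Fintype.piFinset fun _ => N | StrictMono T}

/-- Half of the constant in the lower bound `(d / 2) ^ t / t!` for `d.choose t`, valid for
`2 * t ≤ d`. -/
noncomputable def tupleDensity (t : ℕ) : ℝ := 1 / (2 ^ (t + 1) * t.factorial)

theorem tupleDensity_pos (t : ℕ) : 0 < tupleDensity t := by
  unfold tupleDensity
  positivity

theorem tupleDensity_le_one (t : ℕ) : tupleDensity t ≤ 1 := by
  refine (div_le_one (by positivity)).mpr (one_le_mul_of_one_le_of_one_le ?_ ?_)
  · exact one_le_pow₀ one_le_two
  · exact_mod_cast t.factorial_pos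

theorem choose_card_le_card_increasingTuples (t : ℕ) (N : Finset α) :
    (#N).choose t ≤ #(increasingTuples t N) := by
  rw [← card_powersetCard]
  refine card_le_card_of_surjOn (fun T => univ.image T) fun Q hQ => ?_
  obtain ⟨hQN, hQcard⟩ := mem_powersetCard.mp hQ
  refine ⟨Q.orderEmbOfFin hQcard, ?_, Q.image_orderEmbOfFin_univ hQcard⟩
  rw [mem_coe, increasingTuples, mem_filter, Fintype.mem_piFinset]
  exact ⟨fun p => hQN (Q.orderEmbOfFin_mem hQcard p), (Q.orderEmbOfFin hQcard).strictMono⟩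

theorem two_mul_tupleDensity_mul_pow_le_card {t : ℕ} {N : Finset α}
    (ht : 2 * t ≤ #N) : 2 * tupleDensity t * (#N : ℝ) ^ t ≤ #(increasingTuples t N) := by
  have ht' : (2 * t : ℝ) ≤ #N := by exact_mod_cast ht
  calc 2 * tupleDensity t * (#N : ℝ) ^ t = (#N / 2 : ℝ) ^ t / t.factorial := by
        rw [tupleDensity, div_pow, pow_succ]
        field_simp
    _ ≤ (#N).choose t := by
        rw [div_le_iff₀' (by positivity)]
        exact pow_le_factorial_mul_choose (by positivity) (by linarith)
    _ ≤ #(increasingTuples t N) := by exact_mod_cast choose_card_le_card_increasingTuples t N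

end Tuples

section ZeroOneMatrix

open Finset

variable {m n a b t : ℕ}

theorem ColumnPartite.exists_monotone_part {A : Fin a → Fin b → Bool} (hA : ColumnPartite t A) :
    ∃ P : Fin b → Fin t, Monotone P ∧
      ∀ i j j', A i j = true → A i j' = true → P j = P j' → j = j' := by
  obtain ⟨c, hc, hc0, hct, hrow⟩ := hA
  have hpart (j : Fin b) : ∃ p : Fin t, c p ≤ j ∧ (j : ℕ) < c (p + 1) := by
    have hexists : ∃ p, (j : ℕ) < c (p + 1) := ⟨t, by
      have := hc (Nat.le_succ t)
      grind⟩
    refine ⟨⟨Nat.find hexists, ?_⟩, ?_, Nat.find_spec hexists⟩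
    · rw [Nat.find_lt_iff]
      obtain _ | t := t
      · exact absurd j.isLt (by simp [← hct, hc0])
      · exact ⟨t, Nat.lt_succ_self t, hct ▸ j.isLt⟩
    · obtain hp | hp := Nat.eq_zero_or_eq_succ_pred (Nat.find hexists)
      · simp [hp, hc0]
      · have := Nat.find_min hexists (m := (Nat.find hexists).pred) (by omega)
        grind
  choose P hPle hPlt using hpart
  refine ⟨P, fun j j' hjj' => ?_, fun i j j' hj hj' hPP => ?_⟩
  · by_contra! hlt
    have hle : c (P j' + 1) ≤ c (P j) := hc hlt
    have : (j : ℕ) ≤ j' := hjj'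
    have := hPle j
    have := hPlt j'
    omega
  · refine card_le_one.mp (hrow i (P j) (P j).isLt) _ ?_ _ ?_
    · exact mem_filter.mpr ⟨mem_univ _, hj, hPle j, hPlt j⟩
    · exact mem_filter.mpr ⟨mem_univ _, hj', hPP ▸ hPle j', hPP ▸ hPlt j'⟩

/-- The columns in which the row `r` of `M` has a 1-entry. -/
def rowSupport (M : Fin m → Fin n → Bool) (r : Fin m) : Finset (Fin n) := {j | M r j = true}

/-- The rows of `M` with a 1-entry in each column of the tuple `T`. -/
def commonRows (M : Fin m → Fin n → Bool) (T : Fin t → Fin n) : Finset (Fin m) :=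
  {r | ∀ p, M r (T p) = true}

theorem matWeight_eq_sum_card_rowSupport (M : Fin m → Fin n → Bool) :
    matWeight M = ∑ r, #(rowSupport M r) := by
  simp only [matWeight, rowSupport, card_filter]
  exact Fintype.sum_prod_type _

theorem mem_commonRows_iff_mem_piFinset {M : Fin m → Fin n → Bool} {T : Fin t → Fin n}
    {r : Fin m} : r ∈ commonRows M T ↔ T ∈ Fintype.piFinset fun _ => rowSupport M r := by
  simp [commonRows, rowSupport]

open scoped Classical in
theorem exists_row_card_isBranching_ge {L D : ℕ} {M : Fin m → Fin n → Bool} {q : ℝ} (ht : t ≠ 0)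
    (hm : m ≤ L ^ D) (hq : 2 * t ≤ q) (hM : 2 * m * q ≤ matWeight M)
    (hmq : (n : ℝ) ^ t * (a : ℝ) ^ D < tupleDensity t * m * q ^ t) :
    ∃ r, q ≤ #(rowSupport M r) ∧ tupleDensity t * (#(rowSupport M r) : ℝ) ^ t ≤
      #{T ∈ increasingTuples t (rowSupport M r) | IsBranching L D a (commonRows M T) r} := by
  let nonbranching (r : Fin m) : Finset (Fin t → Fin n) :=
    {T | r ∈ commonRows M T ∧ ¬IsBranching L D a (commonRows M T) r}
  have hnonbranching : ∑ r, (#(nonbranching r) : ℝ) ≤ (n : ℝ) ^ t * (a : ℝ) ^ D := by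
    have := sum_card_not_isBranching_le (τ := Fin t → Fin n) (a := a) hm (commonRows M)
    rw [Fintype.card_fun, Fintype.card_fin, Fintype.card_fin] at this
    exact_mod_cast this
  obtain ⟨r, -, hqr, hr⟩ := exists_le_and_lt_mul_pow (s := univ)
    (d := fun r => (#(rowSupport M r) : ℝ)) (u := fun r => (#(nonbranching r) : ℝ)) ht
    (tupleDensity_pos t).le (le_trans (by positivity) hq) (fun _ _ => Nat.cast_nonneg _)
    (by rw [card_fin]; exact_mod_cast matWeight_eq_sum_card_rowSupport M ▸ hM)
    (by rw [card_fin]; exact hnonbranching.trans_lt hmq)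
  refine ⟨r, hqr, ?_⟩
  have hall := two_mul_tupleDensity_mul_pow_le_card (t := t) (N := rowSupport M r)
    (by exact_mod_cast hq.trans hqr)
  have hsplit := card_filter_add_card_filter_not (s := increasingTuples t (rowSupport M r))
    fun T => IsBranching L D a (commonRows M T) r
  have hsub : #{T ∈ increasingTuples t (rowSupport M r) | ¬IsBranching L D a (commonRows M T) r} ≤
      #(nonbranching r) := by
    refine card_le_card fun T hT => ?_
    obtain ⟨hT, hTr⟩ := mem_filter.mp hT
    exact mem_filter.mpr
      ⟨mem_univ T, mem_commonRows_iff_mem_piFinset.mpr (mem_filter.mp hT).1, hTr⟩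
  have hle : (#(increasingTuples t (rowSupport M r)) : ℝ) ≤
      #{T ∈ increasingTuples t (rowSupport M r) | IsBranching L D a (commonRows M T) r} +
        #(nonbranching r) := by
    exact_mod_cast hsplit.ge.trans (Nat.add_le_add_left hsub _)
  linarith

/-- Column `j` of `A` goes to the `j`-th element of the box side belonging to the part of `j`. The
sides have one element more than needed so that they are nonempty even if `b = 0`. -/
theorem ContainsBox.exists_strictMono_columns {A : Fin a → Fin b → Bool} {P : Fin b → Fin t}
    {G : Finset (Fin t → Fin n)} (hG : ContainsBox (b + 1) G) (hGmono : ∀ T ∈ G, StrictMono T)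
    (hP : Monotone P) (hA : ∀ i j j', A i j = true → A i j' = true → P j = P j' → j = j') :
    ∃ g : Fin b → Fin n, StrictMono g ∧
      ∀ i, ∃ T ∈ G, ∀ j, A i j = true → T (P j) = g j := by
  classical
  obtain ⟨K, hK, hKG⟩ := hG
  let y (p : Fin t) : Fin (b + 1) ↪o Fin n := (K p).orderEmbOfFin (hK p)
  have hyG (u : Fin t → Fin (b + 1)) : (fun p => y p (u p)) ∈ G :=
    hKG (Fintype.mem_piFinset.mpr fun p => (K p).orderEmbOfFin_mem (hK p) (u p))
  refine ⟨fun j => y (P j) j.castSucc, fun j j' hjj' => ?_, fun i => ?_⟩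
  · obtain hlt | heq := (hP hjj'.le).lt_or_eq
    · have := hGmono _ (hyG fun p => if p = P j then j.castSucc else j'.castSucc) hlt
      simpa [hlt.ne'] using this
    · simp only [heq]
      exact (y (P j')).strictMono (Fin.castSucc_lt_castSucc_iff.mpr hjj')
  · let u (p : Fin t) : Fin (b + 1) :=
      if h : ∃ j, A i j = true ∧ P j = p then h.choose.castSucc else 0
    refine ⟨_, hyG u, fun j hj => ?_⟩
    have h : ∃ j', A i j' = true ∧ P j' = P j := ⟨j, hj, rfl⟩
    have hu : u (P j) = j.castSucc := by
      simp only [u, dif_pos h]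
      rw [hA i _ j h.choose_spec.1 hj h.choose_spec.2]
    exact congrArg (y (P j)) hu

theorem matContains_of_containsBox {A : Fin a → Fin b → Bool} {M : Fin m → Fin n → Bool}
    {G : Finset (Fin t → Fin n)} {β : Fin m → ℕ} {ψ : Fin a → ℕ} (hA : ColumnPartite t A)
    (hG : ContainsBox (b + 1) G) (hGmono : ∀ T ∈ G, StrictMono T) (hβ : Monotone β)
    (hψ : StrictMono ψ) (hrows : ∀ T ∈ G, ∀ i, ∃ s ∈ commonRows M T, β s = ψ i) :
    matContains M A := by
  obtain ⟨P, hP, hPA⟩ := hA.exists_monotone_part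
  obtain ⟨g, hg, htransversal⟩ := hG.exists_strictMono_columns hGmono hP hPA
  choose T hTG hTg using htransversal
  choose f hfT hf using fun i => hrows (T i) (hTG i) i
  refine ⟨f, g, fun i i' hii' => hβ.reflect_lt ?_, hg, fun i j hij => ?_⟩
  · rw [hf, hf]
    exact hψ hii'
  · rw [← hTg i j hij]
    exact (mem_filter.mp (hfT i)).2 (P j)

theorem ColumnPartite.exists_matContains_of_le_matWeight {A : Fin a → Fin b → Bool} (ht : t ≠ 0)
    (hA : ColumnPartite t A) : ∃ c : ℕ, ∃ C : ℝ, 0 < C ∧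
      ∀ {m n L D : ℕ} {M : Fin m → Fin n → Bool} {q : ℝ}, 0 < L → m ≤ L ^ D → 2 * t ≤ q →
        2 * m * q ≤ matWeight M →
        (n : ℝ) ^ t * (a : ℝ) ^ D < tupleDensity t * m * q ^ t →
        C ≤ (tupleDensity t / (D * (L : ℝ) ^ a)) ^ c * q → matContains M A := by
  classical
  obtain ⟨c, C, hC, hbox⟩ := exists_containsBox_of_dense (b + 1) t
  refine ⟨c, C, hC, fun {m n L D M q} hL hm hq hM hmq hCq => ?_⟩
  have hε := tupleDensity_pos t
  obtain ⟨r, hqr, hbranching⟩ := exists_row_card_isBranching_ge ht hm hq hM hmq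
  have hd : (0 : ℝ) < #(rowSupport M r) := lt_of_lt_of_le (by positivity) (hq.trans hqr)
  have hnonempty : (0 : ℝ) < _ := lt_of_lt_of_le (by positivity) hbranching
  obtain ⟨j, φ, G, hGsub, hGcard, hrows⟩ := exists_common_digits hL
    (card_pos.mp (Nat.cast_pos.mp hnonempty)) fun T hT => (mem_filter.mp hT).2
  have hGinc : G ⊆ increasingTuples t (rowSupport M r) := hGsub.trans (filter_subset _ _)
  have hD : 0 < D := j.pos
  have hDL : 0 < D * (L : ℝ) ^ a := by positivity
  have hDL1 : 1 ≤ D * (L : ℝ) ^ a := by exact_mod_cast (Nat.mul_pos hD (pow_pos hL a) : 1 ≤ _)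
  refine matContains_of_containsBox (β := digitAncestor L j)
    (ψ := fun i => L * digitAncestor L (j + 1) r + φ i) hA (hbox (S := rowSupport M r)
      (δ := tupleDensity t / (D * (L : ℝ) ^ a)) (by positivity)
      ((div_le_one hDL).mpr ((tupleDensity_le_one t).trans hDL1))
      (hGinc.trans (filter_subset _ _)) ?_ (hCq.trans (by gcongr)))
    (fun T hT => (mem_filter.mp (hGinc hT)).2) (monotone_digitAncestor L j)
    (fun i i' h => Nat.add_lt_add_left (φ.strictMono h) _) hrows
  rw [div_mul_eq_mul_div, div_le_iff₀' hDL]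
  exact hbranching.trans (by exact_mod_cast hGcard)

theorem matEx_le {A : Fin a → Fin b → Bool} {x : ℝ} (hx : 0 ≤ x)
    (h : ∀ M : Fin n → Fin n → Bool, x < matWeight M → matContains M A) :
    (matEx n A : ℝ) ≤ x := by
  rw [← Nat.le_floor_iff hx]
  refine csSup_le' ?_
  rintro _ ⟨M, hM, rfl⟩
  exact Nat.le_floor (not_lt.mp fun hlt => hM (h M hlt))

end ZeroOneMatrix

section Asymptotics

theorem exists_pow_mem_Icc {n D : ℕ} (hn : n ≠ 0) (hD : D ≠ 0) :
    ∃ L, 0 < L ∧ n ≤ L ^ D ∧ L ^ D ≤ 2 ^ D * n := by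
  have hroot : 1 ≤ Nat.nthRoot D n := by
    by_contra! hlt
    have := Nat.lt_pow_nthRoot_add_one hD n
    rw [Nat.lt_one_iff.mp hlt, zero_add, one_pow] at this
    omega
  refine ⟨Nat.nthRoot D n + 1, Nat.succ_pos _, (Nat.lt_pow_nthRoot_add_one hD n).le, ?_⟩
  calc (Nat.nthRoot D n + 1) ^ D ≤ (2 * Nat.nthRoot D n) ^ D := by gcongr; omega
    _ = 2 ^ D * Nat.nthRoot D n ^ D := mul_pow ..
    _ ≤ 2 ^ D * n := by
      gcongr
      exact Nat.pow_nthRoot_le (.inl hD)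

theorem pow_le_two_pow_mul_of_le_sq {L N n : ℕ} {y : ℝ} (hL : 0 < L)
    (hLn : L ^ (2 * N + 1) ≤ 2 ^ (2 * N + 1) * n) (hy : 0 ≤ y) (hny : n ≤ y ^ 2) :
    (L : ℝ) ^ N ≤ 2 ^ (2 * N + 1) * y := by
  have hL1 : (1 : ℝ) ≤ L := by exact_mod_cast hL
  have htwo : (1 : ℝ) ≤ 2 ^ (2 * N + 1) := one_le_pow₀ one_le_two
  refine le_of_pow_le_pow_left₀ two_ne_zero (by positivity) ?_
  calc ((L : ℝ) ^ N) ^ 2 = (L : ℝ) ^ (2 * N) := by rw [← pow_mul, mul_comm]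
    _ ≤ (L : ℝ) ^ (2 * N + 1) := pow_le_pow_right₀ hL1 (Nat.le_succ _)
    _ ≤ 2 ^ (2 * N + 1) * n := by exact_mod_cast hLn
    _ ≤ 2 ^ (2 * N + 1) * y ^ 2 := by gcongr
    _ ≤ 2 ^ (2 * N + 1) * (2 ^ (2 * N + 1) * y ^ 2) := le_mul_of_one_le_left (by positivity) htwo
    _ = (2 ^ (2 * N + 1) * y) ^ 2 := by ring

theorem rpow_one_sub_one_div_pow_mul {x : ℝ} (hx : 0 < x) {t : ℕ} (ht : t ≠ 0) :
    (x ^ (1 - 1 / (t : ℝ))) ^ t * x = x ^ t := by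
  rw [← Real.rpow_natCast, ← Real.rpow_mul hx.le, ← Real.rpow_add_one hx.ne', ← Real.rpow_natCast]
  congr 1
  field_simp
  ring

theorem le_rpow_one_sub_one_div_sq {x : ℝ} (hx : 1 ≤ x) {t : ℕ} (ht : 2 ≤ t) :
    x ≤ (x ^ (1 - 1 / (t : ℝ))) ^ 2 := by
  have hx0 : 0 ≤ x := zero_le_one.trans hx
  have ht' : 1 / (t : ℝ) ≤ 1 / 2 := one_div_le_one_div_of_le two_pos (by exact_mod_cast ht)
  calc x = x ^ (1 : ℝ) := (Real.rpow_one x).symm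
    _ ≤ x ^ ((1 - 1 / (t : ℝ)) * (2 : ℕ)) :=
      Real.rpow_le_rpow_of_exponent_le hx (by push_cast; linarith)
    _ = (x ^ (1 - 1 / (t : ℝ))) ^ 2 := by rw [Real.rpow_mul hx0, Real.rpow_natCast]

/-- Here `y` stands for `n ^ (1 - 1 / t)`. The depth `D` makes the loss `L ^ (a * c)` in the density
of the common pattern at most a constant times `√n`, hence times `y`. -/
theorem ColumnPartite.exists_matContains_of_lt_matWeight {t a b : ℕ} {A : Fin a → Fin b → Bool}
    (ht : t ≠ 0) (hA : ColumnPartite t A) : ∃ Q : ℝ, 0 < Q ∧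
      ∀ {n : ℕ} {y : ℝ} {M : Fin n → Fin n → Bool}, n ≠ 0 → 1 ≤ y → n ≤ y ^ 2 →
        y ^ t * n = (n : ℝ) ^ t → 2 * Q * (y * n) < matWeight M → matContains M A := by
  obtain ⟨c, C, hC, hcontains⟩ := hA.exists_matContains_of_le_matWeight ht
  let D := 2 * (a * c) + 1
  let κ := tupleDensity t / D
  have hε := tupleDensity_pos t
  have : 0 < κ := by positivity
  obtain ⟨Q, hQ1, hQt, hQa, hQC⟩ : ∃ Q : ℝ, 1 ≤ Q ∧ 2 * t ≤ Q ∧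
      (a : ℝ) ^ D / tupleDensity t < Q ∧ C * 2 ^ D / κ ^ c ≤ Q := by
    exact ((Filter.eventually_ge_atTop _).and <| (Filter.eventually_ge_atTop _).and <|
      (Filter.eventually_gt_atTop _).and (Filter.eventually_ge_atTop _)).exists
  rw [div_lt_iff₀' hε] at hQa
  rw [div_le_iff₀' (by positivity)] at hQC
  have hQ0 : 0 < Q := by linarith
  refine ⟨Q, hQ0, fun {n y M} hn hy1 hny hyt hM => ?_⟩
  have hy0 : 0 < y := by linarith
  obtain ⟨L, hL, hnL, hLn⟩ := exists_pow_mem_Icc hn (Nat.succ_ne_zero (2 * (a * c)))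
  refine hcontains (q := Q * y) hL hnL (hQt.trans (le_mul_of_one_le_right hQ0.le hy1))
    (by linarith) ?_ ?_
  · calc (n : ℝ) ^ t * (a : ℝ) ^ D < (n : ℝ) ^ t * (tupleDensity t * Q) := by gcongr
      _ ≤ (n : ℝ) ^ t * (tupleDensity t * Q ^ t) := by
        gcongr
        exact le_self_pow₀ hQ1 ht
      _ = tupleDensity t * n * (Q * y) ^ t := by rw [← hyt]; ring
  · have hLpow := pow_le_two_pow_mul_of_le_sq hL hLn hy0.le hny
    rw [← div_div, div_pow, ← pow_mul, div_mul_eq_mul_div, le_div_iff₀ (by positivity)]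
    calc C * (L : ℝ) ^ (a * c) ≤ C * (2 ^ D * y) := by gcongr
      _ = C * 2 ^ D * y := by ring
      _ ≤ κ ^ c * Q * y := by gcongr
      _ = κ ^ c * (Q * y) := by ring

end Asymptotics

/-- If `t ≥ 2` and `A` is a column-`t`-partite zero-one matrix, then
`ex(n, A) ≤ C · n^(2 - 1/t)`. -/
theorem statement1 (t : ℕ) (ht : 2 ≤ t) (a b : ℕ) (A : Fin a → Fin b → Bool)
    (hA : ColumnPartite t A) :
    ∃ C : ℝ, 0 < C ∧ ∀ n : ℕ, 0 < n →
      (matEx n A : ℝ) ≤ C * (n : ℝ) ^ (2 - 1 / (t : ℝ)) := by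
  have ht0 : t ≠ 0 := by omega
  obtain ⟨Q, hQ, hcontains⟩ := hA.exists_matContains_of_lt_matWeight ht0
  refine ⟨2 * Q, by positivity, fun n hn => matEx_le (by positivity) fun M hM => ?_⟩
  have hn1 : (1 : ℝ) ≤ n := by exact_mod_cast hn
  have hn0 : (0 : ℝ) < n := by linarith
  have hexponent : (0 : ℝ) ≤ 1 - 1 / t :=
    sub_nonneg.mpr (div_le_one_of_le₀ (by exact_mod_cast one_le_two.trans ht) t.cast_nonneg)
  refine hcontains hn.ne' (Real.one_le_rpow hn1 hexponent) (le_rpow_one_sub_one_div_sq hn1 ht)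
    (rpow_one_sub_one_div_pow_mul hn0 ht0) ?_
  rwa [← Real.rpow_add_one hn0.ne', sub_add_eq_add_sub, one_add_one_eq_two]
end

section
/- Let t ≥ 1 be an integer, let ε > 0, and let H be an ordered bipartite graph (an ordered graph with interval chromatic number at most 2, with vertex classes X and Y where every vertex of X precedes every vertex of Y) such that every vertex of X has degree at most t. Then there is a constant C such that for every positive integer n, ex_<(n, H) ≤ C · n^{2 − 1/t + ε}. -/
/-!
Write the vertices of `G` in base `b`, where `b ^ l` is about `n` and `l` is a large constant. Fix a
vertex `r` and a set `c` of `t` forward neighbours of `r`, and record the digit positions at which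
some common backward neighbour of `c` branches off to the left of `r` in the `b`-ary tree of
expansions. For fixed `c`, the vertices `r` with fewer than `x` recorded positions are determined by
these positions and fewer than `x` digits, so there are at most `2 ^ l * b ^ x` of them: few pairs
`(r, c)` are *poor*.

If `G` has many edges then, by convexity and supersaturation, some `r` has a large set of forward
neighbours with no poor `t`-subset. By Ramsey's theorem, applied to the colouring of `t`-subsets by
their recorded positions, we may assume that all `t`-subsets record the same positions. There are at
least `x` of them, and vertices branching off to the left of `r` at higher positions are smaller, so
the vertices of `X` can be embedded one after the other, each into the common backward neighbourhood
of the images of its neighbours.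
-/

/-- An ordered graph `G` on `Fin m` (with the natural vertex order) contains the ordered graph
`H` on `Fin h` as an ordered subgraph if there is an order-preserving injective graph
homomorphism from `H` to `G`. -/
def ordContains {m h : ℕ} (G : SimpleGraph (Fin m)) (H : SimpleGraph (Fin h)) : Prop :=
  ∃ f : Fin h → Fin m, StrictMono f ∧ ∀ u v, H.Adj u v → G.Adj (f u) (f v)

/-- The ordered extremal number `ex_<(n, H)`: the maximum number of edges in an ordered graph
on `n` vertices not containing `H` as an ordered subgraph. -/
noncomputable def ordEx {h : ℕ} (n : ℕ) (H : SimpleGraph (Fin h)) : ℕ :=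
  sSup {e : ℕ | ∃ G : SimpleGraph (Fin n), ¬ ordContains G H ∧ G.edgeSet.ncard = e}

open Finset

universe u

section Ramsey

/-- `R` is an upper bound for the `t`-uniform off-diagonal Ramsey number `r(m k : k ∈ κ)`. A
colouring of the `t`-subsets is encoded as a function on all finite sets, of which only the values
on sets of cardinality `t` matter. -/
def IsRamseyBound.{v, w} {κ : Type w} (t : ℕ) (m : κ → ℕ) (R : ℕ) : Prop :=
  ∀ ⦃α : Type v⦄ (V : Finset α), R ≤ #V → ∀ f : Finset α → κ,
    ∃ k, ∃ S ⊆ V, #S = m k ∧ ∀ T ⊆ S, #T = t → f T = k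

variable {κ : Type*} {t : ℕ} {m : κ → ℕ}

theorem isRamseyBound_zero [Fintype κ] (m : κ → ℕ) : IsRamseyBound.{u} 0 m (∑ k, m k) := by
  intro α V hV f
  obtain ⟨S, hSV, hS⟩ :=
    exists_subset_card_eq ((single_le_sum_of_canonicallyOrdered (mem_univ (f ∅))).trans hV)
  exact ⟨f ∅, S, hSV, hS, fun T _ hT ↦ by rw [card_eq_zero.mp hT]⟩

theorem isRamseyBound_succ_of_eq_zero {k : κ} (hk : m k = 0) :
    IsRamseyBound.{u} (t + 1) m 0 := by
  refine fun α V _ f ↦ ⟨k, ∅, empty_subset V, by rw [hk, card_empty], fun T hT hTc ↦ ?_⟩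
  rw [subset_empty.mp hT, card_empty] at hTc
  omega

theorem forall_subset_insert_eq_of_forall_subset_eq {α : Type*} [DecidableEq α]
    {f : Finset α → κ} {k : κ} {S : Finset α} {v : α}
    (hlink : ∀ T ⊆ S, #T = t → f (insert v T) = k) (hS : ∀ T ⊆ S, #T = t + 1 → f T = k) :
    ∀ T ⊆ insert v S, #T = t + 1 → f T = k := by
  intro T hT hTc
  by_cases hv : v ∈ T
  · rw [← insert_erase hv]
    exact hlink _ (subset_insert_iff.mp hT) (by rw [card_erase_of_mem hv, hTc, Nat.add_sub_cancel])
  · exact hS T ((subset_insert_iff_of_notMem hv).mp hT) hTc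

/-- The Erdős–Rado recurrence: colour the link of a vertex, and pass to a homogeneous set there. -/
theorem IsRamseyBound.succ [DecidableEq κ] {R : κ → ℕ} {R' : ℕ} (hm : ∀ k, m k ≠ 0)
    (hR : ∀ k, IsRamseyBound.{u} (t + 1) (Function.update m k (m k - 1)) (R k))
    (hR' : IsRamseyBound.{u} t R R') : IsRamseyBound.{u} (t + 1) m (R' + 1) := by
  classical
  intro α V hV f
  obtain ⟨v, hv⟩ : V.Nonempty := card_pos.mp (by omega)
  obtain ⟨k₀, S₀, hS₀V, hS₀, hlink⟩ := hR' (V.erase v) (by rw [card_erase_of_mem hv]; omega)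
    fun T ↦ f (insert v T)
  obtain ⟨k, S, hSS₀, hS, hSk⟩ := hR k₀ S₀ hS₀.ge f
  have hSV : S ⊆ V := hSS₀.trans (hS₀V.trans (erase_subset v V))
  obtain rfl | hk := eq_or_ne k k₀
  · have hvS : v ∉ S := fun h ↦ notMem_erase v V (hS₀V (hSS₀ h))
    refine ⟨k, insert v S, insert_subset hv hSV, ?_,
      forall_subset_insert_eq_of_forall_subset_eq (fun T hT ↦ hlink T (hT.trans hSS₀)) hSk⟩
    rw [card_insert_of_notMem hvS, hS, Function.update_self]
    exact Nat.succ_pred (hm k)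
  · exact ⟨k, S, hSV, by rw [hS, Function.update_of_ne hk], hSk⟩

theorem exists_isRamseyBound [Finite κ] (t : ℕ) (m : κ → ℕ) :
    ∃ R, IsRamseyBound.{u} t m R := by
  classical
  cases nonempty_fintype κ
  induction t generalizing m with
  | zero => exact ⟨_, isRamseyBound_zero m⟩
  | succ t iht =>
    induction m using WellFoundedLT.induction with
    | ind m ihm =>
      by_cases! hm : ∃ k, m k = 0
      · obtain ⟨k, hk⟩ := hm
        exact ⟨0, isRamseyBound_succ_of_eq_zero hk⟩
      · choose R hR using fun k ↦ ihm (Function.update m k (m k - 1))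
          (update_lt_self_iff.mpr (Nat.pred_lt (hm k)))
        obtain ⟨R', hR'⟩ := iht R
        exact ⟨R' + 1, .succ hm hR hR'⟩

end Ramsey

section Supersaturation

variable {α : Type*} {t R : ℕ} {V : Finset α} {𝓑 : Finset (Finset α)}

theorem card_filter_superset_powersetCard_le [DecidableEq α] {T : Finset α} (hT : T ⊆ V) (R : ℕ) :
    #{Z ∈ powersetCard R V | T ⊆ Z} ≤ (#V - #T).choose (R - #T) := by
  rw [← card_sdiff_of_subset hT, ← card_powersetCard]
  refine card_le_card_of_injOn (· \ T) (fun Z hZ ↦ ?_) fun Z hZ Z' hZ' hZZ' ↦ ?_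
  · obtain ⟨hZ, hTZ⟩ := mem_filter.mp hZ
    obtain ⟨hZV, hZc⟩ := mem_powersetCard.mp hZ
    exact mem_powersetCard.mpr
      ⟨sdiff_subset_sdiff hZV Subset.rfl, by rw [card_sdiff_of_subset hTZ, hZc]⟩
  · rw [← sdiff_union_of_subset (mem_filter.mp hZ).2, ← sdiff_union_of_subset (mem_filter.mp hZ').2]
    exact congrArg (· ∪ T) hZZ'

theorem choose_card_le_of_forall_exists_subset (h𝓑 : 𝓑 ⊆ powersetCard t V) (hRV : R ≤ #V)
    (hR : ∀ Z ⊆ V, #Z = R → ∃ T ∈ 𝓑, T ⊆ Z) : (#V).choose t ≤ R.choose t * #𝓑 := by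
  classical
  have hsub {T} (hT : T ∈ 𝓑) : T ⊆ V ∧ #T = t := mem_powersetCard.mp (h𝓑 hT)
  have htR : t ≤ R := by
    obtain ⟨Z, hZV, hZ⟩ := exists_subset_card_eq hRV
    obtain ⟨T, hT, hTZ⟩ := hR Z hZV hZ
    rw [← (hsub hT).2, ← hZ]
    exact card_le_card hTZ
  have hcount : (#V).choose R ≤ #𝓑 * (#V - t).choose (R - t) := by
    rw [← card_powersetCard, ← mul_one #(powersetCard R V)]
    refine card_mul_le_card_mul' (fun T Z ↦ T ⊆ Z) (fun Z hZ ↦ ?_) fun T hT ↦ ?_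
    · obtain ⟨T, hT, hTZ⟩ := hR Z (mem_powersetCard.mp hZ).1 (mem_powersetCard.mp hZ).2
      exact card_pos.mpr ⟨T, (mem_bipartiteBelow _).mpr ⟨hT, hTZ⟩⟩
    · exact (card_filter_superset_powersetCard_le (hsub hT).1 R).trans_eq (by rw [(hsub hT).2])
  have hpos : 0 < (#V - t).choose (R - t) := Nat.choose_pos (by omega)
  refine Nat.le_of_mul_le_mul_right ?_ hpos
  calc (#V).choose t * (#V - t).choose (R - t)
      = (#V).choose R * R.choose t := (Nat.choose_mul htR).symm
    _ ≤ #𝓑 * (#V - t).choose (R - t) * R.choose t := Nat.mul_le_mul_right _ hcount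
    _ = R.choose t * #𝓑 * (#V - t).choose (R - t) := by ring

theorem pow_le_two_pow_mul_factorial_mul_choose {d t : ℕ} (hd : 2 * t ≤ d) :
    d ^ t ≤ 2 ^ t * (t.factorial * d.choose t) :=
  calc d ^ t ≤ (2 * (d + 1 - t)) ^ t := Nat.pow_le_pow_left (by omega) t
    _ = 2 ^ t * (d + 1 - t) ^ t := mul_pow ..
    _ ≤ 2 ^ t * (t.factorial * d.choose t) := by
      rw [← Nat.descFactorial_eq_factorial_mul_choose]
      exact Nat.mul_le_mul_left _ (Nat.pow_sub_le_descFactorial d t)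

theorem exists_forall_pow_card_le (t R : ℕ) :
    ∃ A : ℕ, ∀ {α : Type u} {V : Finset α} {𝓑 : Finset (Finset α)}, 𝓑 ⊆ powersetCard t V →
      (∀ Z ⊆ V, #Z = R → ∃ T ∈ 𝓑, T ⊆ Z) → #V ^ t ≤ A * (#𝓑 + 1) := by
  refine ⟨2 ^ t * t.factorial * R.choose t + (R + 2 * t) ^ t, fun {α V 𝓑} h𝓑 hR ↦ ?_⟩
  obtain hV | hV := le_total (#V) (R + 2 * t)
  · calc #V ^ t ≤ (R + 2 * t) ^ t := Nat.pow_le_pow_left hV t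
      _ ≤ _ := (Nat.le_add_left _ _).trans (Nat.le_mul_of_pos_right _ (Nat.succ_pos _))
  · calc #V ^ t ≤ 2 ^ t * (t.factorial * (#V).choose t) :=
          pow_le_two_pow_mul_factorial_mul_choose (by omega)
      _ ≤ 2 ^ t * (t.factorial * (R.choose t * #𝓑)) := by
          gcongr
          exact choose_card_le_of_forall_exists_subset h𝓑 (by omega) hR
      _ = 2 ^ t * t.factorial * R.choose t * #𝓑 := by ring
      _ ≤ _ := Nat.mul_le_mul (Nat.le_add_right _ _) (Nat.le_succ _)

end Supersaturation

section LeftBranch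

/-- In the `b`-ary tree whose level-`j` node above `r` is `r / b ^ j`, the number `s` branches off
to the left of `r` at level `j`: the base-`b` expansions of `s` and `r` agree above position `j`,
and `s` has the smaller digit there. -/
def LeftBranch (b j s r : ℕ) : Prop :=
  s / b ^ (j + 1) = r / b ^ (j + 1) ∧ s / b ^ j < r / b ^ j

instance (b j s r : ℕ) : Decidable (LeftBranch b j s r) :=
  inferInstanceAs (Decidable (_ ∧ _))

namespace LeftBranch

variable {b i j r s s' : ℕ}

theorem lt (h : LeftBranch b j s r) : s < r :=
  lt_of_not_ge fun hrs ↦ h.2.not_ge (Nat.div_le_div_right hrs)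

theorem lt_of_level_lt (hs : LeftBranch b i s r) (hs' : LeftBranch b j s' r) (hij : i < j) :
    s' < s := by
  have hdiv : s / b ^ j = r / b ^ j := by
    rw [← Nat.add_sub_of_le hij, pow_add, ← Nat.div_div_eq_div_mul, ← Nat.div_div_eq_div_mul, hs.1]
  exact lt_of_not_ge fun hss' ↦ (hdiv ▸ hs'.2).not_ge (Nat.div_le_div_right hss')

theorem digit_lt (h : LeftBranch b j s r) : s / b ^ j % b < r / b ^ j % b := by
  obtain ⟨hdiv, hlt⟩ := h
  rw [pow_succ, ← Nat.div_div_eq_div_mul, ← Nat.div_div_eq_div_mul] at hdiv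
  rw [← Nat.div_add_mod (s / b ^ j) b, ← Nat.div_add_mod (r / b ^ j) b, hdiv] at hlt
  exact Nat.lt_of_add_lt_add_left hlt

end LeftBranch

theorem exists_leftBranch_of_ne {b l r s : ℕ} (hr : r < b ^ l) (hs : s < b ^ l) (hrs : r ≠ s) :
    ∃ j < l, LeftBranch b j r s ∨ LeftBranch b j s r := by
  have hl : r / b ^ l = s / b ^ l := by rw [Nat.div_eq_of_lt hr, Nat.div_eq_of_lt hs]
  have hmeet : ∃ j, r / b ^ j = s / b ^ j := ⟨l, hl⟩
  have hpos : Nat.find hmeet ≠ 0 := fun h ↦ hrs (by simpa [h] using Nat.find_spec hmeet)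
  obtain ⟨j, hj⟩ := Nat.exists_eq_succ_of_ne_zero hpos
  have hnode : r / b ^ (j + 1) = s / b ^ (j + 1) := by simpa only [hj] using Nat.find_spec hmeet
  have hchild : r / b ^ j ≠ s / b ^ j := Nat.find_min hmeet (by omega)
  refine ⟨j, by have := Nat.find_le (h := hmeet) hl; omega, ?_⟩
  exact hchild.lt_or_gt.imp (⟨hnode, ·⟩) (⟨hnode.symm, ·⟩)

variable {b l n x : ℕ}

/-- The levels below `l` at which some element of `N` branches off to the left of `r`. -/
def leftLevels (b l : ℕ) (N : Finset (Fin n)) (r : Fin n) : Finset (Fin l) :=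
  {j | ∃ s ∈ N, LeftBranch b j s r}

theorem mem_leftLevels {N : Finset (Fin n)} {r : Fin n} {j : Fin l} :
    j ∈ leftLevels b l N r ↔ ∃ s ∈ N, LeftBranch b j s r := by
  simp only [leftLevels, mem_filter_univ]

theorem exists_strictMono_mem_of_subset_leftLevels {N : Fin x → Finset (Fin n)} {r : Fin n}
    {L : Finset (Fin l)} (hx : x ≤ #L) (hL : ∀ i, L ⊆ leftLevels b l (N i) r) :
    ∃ σ : Fin x → Fin n, StrictMono σ ∧ ∀ i, σ i ∈ N i ∧ σ i < r := by
  let level : Fin x ↪o Fin l := L.orderEmbOfCardLe hx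
  have hbranch (i : Fin x) : ∃ s ∈ N i, LeftBranch b (level i.rev) s r :=
    mem_leftLevels.mp (hL i (L.orderEmbOfCardLe_mem hx i.rev))
  choose σ hσN hσr using hbranch
  refine ⟨σ, fun i j hij ↦ ?_, fun i ↦ ⟨hσN i, (hσr i).lt⟩⟩
  exact (hσr j).lt_of_level_lt (hσr i) (level.strictMono (Fin.rev_lt_rev.mpr hij))

/-- The elements counted here are determined by their digits at the levels in `L`: two of them
branch at a level that one of them has in its `leftLevels`. -/
theorem card_filter_leftLevels_eq_le (hb : 0 < b) (hn : n ≤ b ^ l) (N : Finset (Fin n))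
    (L : Finset (Fin l)) : #{r ∈ N | leftLevels b l N r = L} ≤ b ^ #L := by
  let digits (r : Fin n) (j : L) : ℕ := r / b ^ (j : ℕ) % b
  have not_branch {r s : Fin n} {j : Fin l} (hs : s ∈ N) (hr : leftLevels b l N r = L)
      (hdigits : digits s = digits r) : ¬ LeftBranch b j s r := fun h ↦
    h.digit_lt.ne (congrFun hdigits ⟨j, hr ▸ mem_leftLevels.mpr ⟨s, hs, h⟩⟩)
  calc #{r ∈ N | leftLevels b l N r = L} ≤ #(Fintype.piFinset fun _ : L ↦ range b) := by
        refine card_le_card_of_injOn digits (fun r _ ↦ ?_) fun r hr s hs hrs ↦ ?_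
        · exact Fintype.mem_piFinset.mpr fun j ↦ mem_range.mpr (Nat.mod_lt _ hb)
        · obtain ⟨hrN, hrL⟩ := mem_filter.mp hr
          obtain ⟨hsN, hsL⟩ := mem_filter.mp hs
          by_contra hne
          obtain ⟨j, hj, h | h⟩ := exists_leftBranch_of_ne (r.2.trans_le hn) (s.2.trans_le hn)
            (Fin.val_ne_of_ne hne)
          · exact not_branch (j := ⟨j, hj⟩) hrN hsL hrs h
          · exact not_branch (j := ⟨j, hj⟩) hsN hrL hrs.symm h
    _ = b ^ #L := by
        simp only [Fintype.card_piFinset, prod_const, card_range, card_univ, Fintype.card_coe]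

theorem card_filter_card_leftLevels_lt_le (hb : 0 < b) (hn : n ≤ b ^ l) (x : ℕ)
    (N : Finset (Fin n)) : #{r ∈ N | #(leftLevels b l N r) < x} ≤ 2 ^ l * b ^ x := by
  let few : Finset (Finset (Fin l)) := {L | #L < x}
  calc #{r ∈ N | #(leftLevels b l N r) < x} ≤ b ^ x * #few := by
        refine card_le_mul_card_image_of_maps_to (f := leftLevels b l N) (t := few)
          (fun r hr ↦ (mem_filter_univ _).mpr (mem_filter.mp hr).2) _ fun L hL ↦ ?_
        calc _ ≤ #{r ∈ N | leftLevels b l N r = L} :=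
              card_le_card (filter_subset_filter _ (filter_subset _ _))
          _ ≤ b ^ #L := card_filter_leftLevels_eq_le hb hn N L
          _ ≤ b ^ x := Nat.pow_le_pow_right hb ((mem_filter_univ _).mp hL).le
    _ ≤ b ^ x * 2 ^ l := by
        gcongr
        simpa using card_le_univ few
    _ = 2 ^ l * b ^ x := mul_comm ..

end LeftBranch

section OrderedGraph

variable {b h l n t x : ℕ} {H : SimpleGraph (Fin h)} {G : SimpleGraph (Fin n)}

theorem ordEx_le {a : ℝ} (ha : 0 ≤ a)
    (hG : ∀ G : SimpleGraph (Fin n), ¬ ordContains G H → (G.edgeSet.ncard : ℝ) ≤ a) :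
    (ordEx n H : ℝ) ≤ a := by
  refine (Nat.le_floor_iff ha).mp (csSup_le' ?_)
  rintro e ⟨G, hGH, rfl⟩
  exact Nat.le_floor (hG G hGH)

theorem ordContains_of_strictMono
    (hbip : ∀ u v : Fin h, H.Adj u v → u < v → (u : ℕ) < x ∧ x ≤ (v : ℕ))
    {σ : Fin x → Fin n} {e : Fin h → Fin n} (hσ : StrictMono σ) (he : StrictMono e)
    (hσe : ∀ i v, σ i < e v)
    (hadj : ∀ (u v : Fin h) (hu : (u : ℕ) < x), H.Adj u v → G.Adj (σ ⟨u, hu⟩) (e v)) :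
    ordContains G H := by
  let f (u : Fin h) : Fin n := if hu : (u : ℕ) < x then σ ⟨u, hu⟩ else e u
  have hf_left {u : Fin h} (hu : (u : ℕ) < x) : f u = σ ⟨u, hu⟩ := dif_pos hu
  have hf_right {u : Fin h} (hu : x ≤ (u : ℕ)) : f u = e u := dif_neg hu.not_gt
  have hf_adj {u v : Fin h} (huv : H.Adj u v) (hlt : u < v) : G.Adj (f u) (f v) := by
    obtain ⟨hu, hv⟩ := hbip u v huv hlt
    rw [hf_left hu, hf_right hv]
    exact hadj u v hu huv
  refine ⟨f, fun u v huv ↦ ?_, fun u v huv ↦ ?_⟩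
  · obtain hv | hv := lt_or_ge (v : ℕ) x
    · rw [hf_left (lt_trans huv hv), hf_left hv]
      exact hσ huv
    · rw [hf_right hv]
      obtain hu | hu := lt_or_ge (u : ℕ) x
      · rw [hf_left hu]
        exact hσe _ v
      · rw [hf_right hu]
        exact he huv
  · obtain hlt | hlt := huv.ne.lt_or_gt
    · exact hf_adj huv hlt
    · exact (hf_adj huv.symm hlt).symm

variable (G) [DecidableRel G.Adj]

/-- The neighbours of `r` that come after `r` in the vertex order. -/
def forwardNeighbors (r : Fin n) : Finset (Fin n) := {v | r < v ∧ G.Adj r v}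

/-- The vertices that precede, and are adjacent to, every vertex of `c`. -/
def commonBackwardNeighbors (c : Finset (Fin n)) : Finset (Fin n) := {r | c ⊆ forwardNeighbors G r}

variable {G}

theorem mem_forwardNeighbors {r v : Fin n} : v ∈ forwardNeighbors G r ↔ r < v ∧ G.Adj r v :=
  mem_filter_univ v

theorem mem_commonBackwardNeighbors {c : Finset (Fin n)} {r : Fin n} :
    r ∈ commonBackwardNeighbors G c ↔ c ⊆ forwardNeighbors G r :=
  mem_filter_univ r

variable (G) in
theorem ncard_edgeSet_eq_sum_card_forwardNeighbors :
    G.edgeSet.ncard = ∑ r, #(forwardNeighbors G r) := by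
  have hedges : G.edgeSet = Set.image (fun p : (_ : Fin n) × Fin n ↦ s(p.1, p.2))
      (univ.sigma (forwardNeighbors G) : Finset _) := by
    ext e
    induction e with | _ u v
    simp only [SimpleGraph.mem_edgeSet, Set.mem_image, mem_coe, mem_sigma, mem_univ, true_and,
      mem_forwardNeighbors]
    refine ⟨fun huv ↦ ?_, ?_⟩
    · obtain hlt | hlt := huv.ne.lt_or_gt
      · exact ⟨⟨u, v⟩, ⟨hlt, huv⟩, rfl⟩
      · exact ⟨⟨v, u⟩, ⟨hlt, huv.symm⟩, Sym2.eq_swap⟩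
    · rintro ⟨⟨u', v'⟩, ⟨-, hadj⟩, heq⟩
      rwa [← SimpleGraph.mem_edgeSet, ← heq]
  rw [hedges, Set.InjOn.ncard_image, Set.ncard_coe_finset, card_sigma]
  rintro ⟨u, v⟩ huv ⟨u', v'⟩ huv' heq
  have hlt := (mem_forwardNeighbors.mp (mem_sigma.mp huv).2).1
  have hlt' := (mem_forwardNeighbors.mp (mem_sigma.mp huv').2).1
  obtain ⟨rfl, rfl⟩ | ⟨rfl, rfl⟩ := Sym2.eq_iff.mp heq
  · rfl
  · exact absurd hlt hlt'.asymm

theorem ordContains_of_subset_leftLevels (hxh : x ≤ h)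
    (hbip : ∀ u v : Fin h, H.Adj u v → u < v → (u : ℕ) < x ∧ x ≤ (v : ℕ))
    (hdeg : ∀ u : Fin h, (u : ℕ) < x → (H.neighborSet u).ncard ≤ t)
    {r : Fin n} {S : Finset (Fin n)} (hSr : S ⊆ forwardNeighbors G r) (hhS : h ≤ #S) (htS : t ≤ #S)
    {L : Finset (Fin l)} (hxL : x ≤ #L)
    (hL : ∀ c ⊆ S, #c = t → L ⊆ leftLevels b l (commonBackwardNeighbors G c) r) :
    ordContains G H := by
  classical
  let e : Fin h ↪o Fin n := S.orderEmbOfCardLe hhS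
  have heS (v : Fin h) : e v ∈ S := S.orderEmbOfCardLe_mem hhS v
  have hcover (i : Fin x) : ∃ c ⊆ S, #c = t ∧ ∀ v, H.Adj (i.castLE hxh) v → e v ∈ c := by
    let E : Finset (Fin n) := (H.neighborFinset (i.castLE hxh)).image e
    have hES : E ⊆ S := image_subset_iff.mpr fun v _ ↦ heS v
    have hEt : #E ≤ t := by
      refine card_image_le.trans ?_
      rw [SimpleGraph.neighborFinset, ← Set.ncard_eq_toFinset_card']
      exact hdeg _ i.isLt
    obtain ⟨c, hEc, hcS, hct⟩ := exists_subsuperset_card_eq hES hEt htS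
    exact ⟨c, hcS, hct, fun v hv ↦
      hEc (mem_image_of_mem e ((SimpleGraph.mem_neighborFinset ..).mpr hv))⟩
  choose c hcS hct hadj using hcover
  obtain ⟨σ, hσ, hσc⟩ :=
    exists_strictMono_mem_of_subset_leftLevels hxL fun i ↦ hL (c i) (hcS i) (hct i)
  refine ordContains_of_strictMono hbip hσ e.strictMono (fun i v ↦ ?_) fun u v hu huv ↦ ?_
  · exact (hσc i).2.trans (mem_forwardNeighbors.mp (hSr (heS v))).1
  · have hcσ := mem_commonBackwardNeighbors.mp (hσc ⟨u, hu⟩).1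
    exact (mem_forwardNeighbors.mp (hcσ (hadj ⟨u, hu⟩ v huv))).2

/-- The `t`-sets `c` of forward neighbours of `r` that are poor for `r`: the common backward
neighbours of `c` branch off to the left of `r` at fewer than `x` levels. -/
def poorSets (b l t x : ℕ) {n : ℕ} (G : SimpleGraph (Fin n)) [DecidableRel G.Adj] (r : Fin n) :
    Finset (Finset (Fin n)) :=
  {c ∈ powersetCard t (forwardNeighbors G r) |
    #(leftLevels b l (commonBackwardNeighbors G c) r) < x}

theorem exists_mem_poorSets_subset_of_not_ordContains (hxh : x ≤ h)
    (hbip : ∀ u v : Fin h, H.Adj u v → u < v → (u : ℕ) < x ∧ x ≤ (v : ℕ))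
    (hdeg : ∀ u : Fin h, (u : ℕ) < x → (H.neighborSet u).ncard ≤ t) (hG : ¬ ordContains G H)
    {R : ℕ} (hR : IsRamseyBound.{0} t (fun _ : Finset (Fin l) ↦ h + t) R)
    {r : Fin n} {Z : Finset (Fin n)} (hZr : Z ⊆ forwardNeighbors G r) (hZ : R ≤ #Z) :
    ∃ c ∈ poorSets b l t x G r, c ⊆ Z := by
  obtain ⟨L, S, hSZ, hS, hL⟩ :=
    hR Z hZ fun c : Finset (Fin n) ↦ leftLevels b l (commonBackwardNeighbors G c) r
  replace hS : #S = h + t := hS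
  have hSr := hSZ.trans hZr
  obtain ⟨c, hcS, hct⟩ := exists_subset_card_eq (show t ≤ #S by omega)
  have hxL : #L < x := by
    by_contra! hxL
    exact hG (ordContains_of_subset_leftLevels hxh hbip hdeg hSr (by omega) (by omega) hxL
      fun c hcS hct ↦ (hL c hcS hct).ge)
  refine ⟨c, mem_filter.mpr ⟨mem_powersetCard.mpr ⟨hcS.trans hSr, hct⟩, ?_⟩, hcS.trans hSZ⟩
  rwa [hL c hcS hct]

variable (G) in
theorem sum_card_poorSets_le (hb : 0 < b) (hn : n ≤ b ^ l) (t x : ℕ) :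
    ∑ r, #(poorSets b l t x G r) ≤ n ^ t * (2 ^ l * b ^ x) := by
  let Poor (r : Fin n) (c : Finset (Fin n)) : Prop :=
    c ⊆ forwardNeighbors G r ∧ #(leftLevels b l (commonBackwardNeighbors G c) r) < x
  have hrow (r : Fin n) :
      poorSets b l t x G r = (powersetCard t univ).bipartiteAbove Poor r := by
    ext c
    simp only [poorSets, Poor, mem_filter, mem_powersetCard, mem_bipartiteAbove, subset_univ,
      true_and]
    tauto
  have hcol (c : Finset (Fin n)) : univ.bipartiteBelow Poor c =
      {r ∈ commonBackwardNeighbors G c |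
        #(leftLevels b l (commonBackwardNeighbors G c) r) < x} := by
    ext r
    simp only [Poor, mem_filter, mem_bipartiteBelow, mem_univ, true_and,
      mem_commonBackwardNeighbors]
  calc ∑ r, #(poorSets b l t x G r)
      = ∑ c ∈ powersetCard t univ, #(univ.bipartiteBelow Poor c) := by
        simp only [hrow, sum_card_bipartiteAbove_eq_sum_card_bipartiteBelow]
    _ ≤ #(powersetCard t (univ : Finset (Fin n))) • (2 ^ l * b ^ x) := by
        refine sum_le_card_nsmul _ _ _ fun c _ ↦ ?_
        rw [hcol]
        exact card_filter_card_leftLevels_lt_le hb hn x _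
    _ ≤ n ^ t * (2 ^ l * b ^ x) := by
        rw [card_powersetCard, card_univ, Fintype.card_fin, smul_eq_mul]
        exact Nat.mul_le_mul_right _ (Nat.choose_le_pow n t)

theorem exists_pow_ncard_edgeSet_le (l : ℕ) (ht : 1 ≤ t) (hxh : x ≤ h)
    (hbip : ∀ u v : Fin h, H.Adj u v → u < v → (u : ℕ) < x ∧ x ≤ (v : ℕ))
    (hdeg : ∀ u : Fin h, (u : ℕ) < x → (H.neighborSet u).ncard ≤ t) :
    ∃ K : ℕ, ∀ n b : ℕ, 0 < b → n ≤ b ^ l → ∀ G : SimpleGraph (Fin n), ¬ ordContains G H →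
      G.edgeSet.ncard ^ t ≤ K * n ^ (2 * t - 1) * b ^ x := by
  classical
  obtain ⟨R, hR⟩ := exists_isRamseyBound t fun _ : Finset (Fin l) ↦ h + t
  obtain ⟨A, hA⟩ := exists_forall_pow_card_le t R
  refine ⟨A * (2 ^ l + 1), fun n b hb hn G hG ↦ ?_⟩
  have hrow (r : Fin n) : #(forwardNeighbors G r) ^ t ≤ A * (#(poorSets b l t x G r) + 1) :=
    hA (filter_subset _ _) fun Z hZr hZ ↦
      exists_mem_poorSets_subset_of_not_ordContains hxh hbip hdeg hG hR hZr hZ.ge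
  obtain ⟨t, rfl⟩ := Nat.exists_eq_add_of_le' ht
  have hpower_mean : (∑ r, #(forwardNeighbors G r)) ^ (t + 1) ≤
      n ^ t * ∑ r, #(forwardNeighbors G r) ^ (t + 1) := by
    simpa only [card_univ, Fintype.card_fin, Nat.cast_id] using
      pow_sum_le_card_mul_sum_pow (s := univ) (f := fun r ↦ #(forwardNeighbors G r))
        (fun _ _ ↦ Nat.zero_le _) t
  have hn_le : n ≤ n ^ (t + 1) * b ^ x :=
    (Nat.le_self_pow t.succ_ne_zero n).trans (Nat.le_mul_of_pos_right _ (pow_pos hb x))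
  calc G.edgeSet.ncard ^ (t + 1) ≤ n ^ t * ∑ r, #(forwardNeighbors G r) ^ (t + 1) :=
        ncard_edgeSet_eq_sum_card_forwardNeighbors G ▸ hpower_mean
    _ ≤ n ^ t * ∑ r, A * (#(poorSets b l (t + 1) x G r) + 1) := by
        gcongr with r
        exact hrow r
    _ = n ^ t * (A * (∑ r, #(poorSets b l (t + 1) x G r) + n)) := by
        rw [← mul_sum, sum_add_distrib, sum_const, card_univ, Fintype.card_fin, smul_eq_mul,
          mul_one]
    _ ≤ n ^ t * (A * (n ^ (t + 1) * (2 ^ l * b ^ x) + n ^ (t + 1) * b ^ x)) := by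
        gcongr
        exact sum_card_poorSets_le G hb hn (t + 1) x
    _ = A * (2 ^ l + 1) * n ^ (2 * (t + 1) - 1) * b ^ x := by
        rw [show 2 * (t + 1) - 1 = t + (t + 1) by omega, pow_add]
        ring

end OrderedGraph

section Asymptotics

theorem exists_le_pow_and_le_two_mul_rpow {n l : ℕ} (hn : 0 < n) (hl : l ≠ 0) :
    ∃ b : ℕ, 0 < b ∧ n ≤ b ^ l ∧ (b : ℝ) ≤ 2 * (n : ℝ) ^ (1 / (l : ℝ)) := by
  set y : ℝ := (n : ℝ) ^ (1 / (l : ℝ)) with hy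
  have hy_one : 1 ≤ y := Real.one_le_rpow (by exact_mod_cast hn) (by positivity)
  have hy_pow : y ^ l = n := by
    rw [hy, one_div, Real.rpow_inv_natCast_pow (Nat.cast_nonneg n) hl]
  refine ⟨⌈y⌉₊, Nat.ceil_pos.mpr (by linarith), ?_, ?_⟩
  · have : (n : ℝ) ≤ (⌈y⌉₊ : ℝ) ^ l := hy_pow ▸ pow_le_pow_left₀ (by linarith) (Nat.le_ceil y) l
    exact_mod_cast this
  · linarith [Nat.ceil_lt_add_one (show 0 ≤ y by linarith)]

theorem pow_le_two_pow_mul_rpow {b y z ε : ℝ} {x : ℕ} (hb : 0 ≤ b) (hy : 1 ≤ y)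
    (hby : b ≤ 2 * y ^ z) (hzx : z * x ≤ ε) : b ^ x ≤ 2 ^ x * y ^ ε :=
  calc b ^ x ≤ (2 * y ^ z) ^ x := by gcongr
    _ = 2 ^ x * y ^ (z * x) := by rw [mul_pow, Real.rpow_mul_natCast (by linarith)]
    _ ≤ 2 ^ x * y ^ ε := by gcongr

theorem le_mul_rpow_of_pow_le {e n K ε : ℝ} {t : ℕ} (ht : 1 ≤ t) (hε : 0 ≤ ε) (hn : 1 ≤ n)
    (hK : 0 ≤ K) (h : e ^ t ≤ K * n ^ (2 * t - 1) * n ^ ε) :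
    e ≤ (K + 1) * n ^ (2 - 1 / (t : ℝ) + ε) := by
  have ht' : (1 : ℝ) ≤ t := by exact_mod_cast ht
  have hn₀ : 0 < n := by linarith
  have hexp : (2 * t - 1 : ℕ) + ε ≤ (2 - 1 / (t : ℝ) + ε) * t := by
    rw [Nat.cast_sub (by omega)]
    push_cast
    have : (2 - 1 / (t : ℝ) + ε) * t = 2 * t - 1 + ε * t := by field_simp
    nlinarith
  refine le_of_pow_le_pow_left₀ (by omega) (by positivity) (h.trans ?_)
  calc K * n ^ (2 * t - 1) * n ^ ε = K * n ^ ((2 * t - 1 : ℕ) + ε) := by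
        rw [Real.rpow_add hn₀, Real.rpow_natCast, mul_assoc]
    _ ≤ (K + 1) ^ t * n ^ ((2 - 1 / (t : ℝ) + ε) * t) := by
        gcongr
        exact (le_add_of_nonneg_right zero_le_one).trans
          (le_self_pow₀ (by linarith) (by omega))
    _ = ((K + 1) * n ^ (2 - 1 / (t : ℝ) + ε)) ^ t := by
        rw [mul_pow, Real.rpow_mul hn₀.le, Real.rpow_natCast]

end Asymptotics

/-- Let `H` be an ordered bipartite graph on `Fin h`, with vertex classes
`X = {v : v < x}` and `Y = {v : x ≤ v}` (every edge goes between `X` and `Y`), such that every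
vertex of `X` has degree at most `t`. Then `ex_<(n, H) ≤ C · n^(2 - 1/t + ε)`. -/
theorem statement2 (t : ℕ) (ht : 1 ≤ t) (ε : ℝ) (hε : 0 < ε) (h x : ℕ) (hx : x ≤ h)
    (H : SimpleGraph (Fin h))
    (hbip : ∀ u v : Fin h, H.Adj u v → u < v → (u : ℕ) < x ∧ x ≤ (v : ℕ))
    (hdeg : ∀ u : Fin h, (u : ℕ) < x → (H.neighborSet u).ncard ≤ t) :
    ∃ C : ℝ, 0 < C ∧ ∀ n : ℕ, 0 < n →
      (ordEx n H : ℝ) ≤ C * (n : ℝ) ^ (2 - 1 / (t : ℝ) + ε) := by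
  obtain ⟨l, hl⟩ := exists_nat_gt (x / ε)
  have hl_pos : (0 : ℝ) < l := lt_of_le_of_lt (by positivity) hl
  have hlx : 1 / (l : ℝ) * x ≤ ε := by
    rw [one_div_mul_eq_div, div_le_iff₀ hl_pos]
    linarith [(div_lt_iff₀ hε).mp hl]
  obtain ⟨K, hK⟩ := exists_pow_ncard_edgeSet_le l ht hx hbip hdeg
  refine ⟨K * 2 ^ x + 1, by positivity, fun n hn ↦ ordEx_le (by positivity) fun G hG ↦ ?_⟩
  have hn_one : (1 : ℝ) ≤ n := Nat.one_le_cast.mpr hn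
  obtain ⟨b, hb, hnb, hbn⟩ := exists_le_pow_and_le_two_mul_rpow hn (Nat.cast_pos.mp hl_pos).ne'
  have hbx : (b : ℝ) ^ x ≤ 2 ^ x * (n : ℝ) ^ ε :=
    pow_le_two_pow_mul_rpow b.cast_nonneg hn_one hbn hlx
  refine le_mul_rpow_of_pow_le ht hε.le hn_one (by positivity) ?_
  calc (G.edgeSet.ncard : ℝ) ^ t ≤ K * (n : ℝ) ^ (2 * t - 1) * (b : ℝ) ^ x :=
        mod_cast hK n b hb hnb G hG
    _ ≤ K * (n : ℝ) ^ (2 * t - 1) * (2 ^ x * (n : ℝ) ^ ε) := by gcongr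
    _ = K * 2 ^ x * (n : ℝ) ^ (2 * t - 1) * (n : ℝ) ^ ε := by ring
end
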